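/- arXiv:1911.08385 — 2 statements merged into one kernel-verified Lean document; each statement's English description precedes it below -/
import Mathlib

section
/- Let V = ℂ⁴ with basis indexed by {1,2,3,4}, define ε^{αβ} := (−1)^α if α + β = 5 and 0 otherwise, and ε_{αβ} by the same formula. For each complex u define the operator R(u) on V ⊗ V by its matrix entries R^{α_1 α_2}_{β_1 β_2}(u) := 2u(2u+3)·δ^{α_1}_{β_1}δ^{α_2}_{β_2} + (2u+3)·δ^{α_1}_{β_2}δ^{α_2}_{β_1} − 2u·ε^{α_1 α_2}·ε_{β_1 β_2}. Then R satisfies the Yang–Baxter equation: for all complex u, v, R_{12}(u−v) · R_{13}(u) · R_{23}(v) = R_{23}(v) · R_{13}(u) · R_{12}(u−v) on V ⊗ V ⊗ V. -/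
/-- The antisymmetric symplectic metric `ε` on `ℂ⁴` (basis indexed by `{1,2,3,4}`,
realized as `Fin 4` via `α ↦ α+1`): `ε^{αβ} = (−1)^α` if `α + β = 5` and `0` otherwise. -/
def symplEps (a b : Fin 4) : ℂ :=
  if (a : ℕ) + (b : ℕ) = 3 then (-1 : ℂ) ^ ((a : ℕ) + 1) else 0

/-- The spinorial `so(5)` R-matrix on `ℂ⁴ ⊗ ℂ⁴`, which after the rescaling `2u → u`
coincides with the fundamental `sp(4)` R-matrix:
`R^{α₁α₂}_{β₁β₂}(u) = 2u(2u+3)·δδ + (2u+3)·δδ(swap) − 2u·ε^{α₁α₂}ε_{β₁β₂}`. -/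
noncomputable def so5SpinR (u : ℂ) : Matrix (Fin 4 × Fin 4) (Fin 4 × Fin 4) ℂ :=
  Matrix.of fun p q =>
    2 * u * (2 * u + 3) * (if p.1 = q.1 then 1 else 0) * (if p.2 = q.2 then 1 else 0) +
      (2 * u + 3) * (if p.1 = q.2 then 1 else 0) * (if p.2 = q.1 then 1 else 0) -
      2 * u * symplEps p.1 p.2 * symplEps q.1 q.2

/-- `R₁₂(u)` on `ℂ⁴ ⊗ ℂ⁴ ⊗ ℂ⁴`. -/
noncomputable def so5SpinR12 (u : ℂ) :
    Matrix (Fin 4 × Fin 4 × Fin 4) (Fin 4 × Fin 4 × Fin 4) ℂ :=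
  Matrix.of fun p q =>
    so5SpinR u (p.1, p.2.1) (q.1, q.2.1) * (if p.2.2 = q.2.2 then 1 else 0)

/-- `R₁₃(u)` on `ℂ⁴ ⊗ ℂ⁴ ⊗ ℂ⁴`. -/
noncomputable def so5SpinR13 (u : ℂ) :
    Matrix (Fin 4 × Fin 4 × Fin 4) (Fin 4 × Fin 4 × Fin 4) ℂ :=
  Matrix.of fun p q =>
    so5SpinR u (p.1, p.2.2) (q.1, q.2.2) * (if p.2.1 = q.2.1 then 1 else 0)

/-- `R₂₃(u)` on `ℂ⁴ ⊗ ℂ⁴ ⊗ ℂ⁴`. -/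
noncomputable def so5SpinR23 (u : ℂ) :
    Matrix (Fin 4 × Fin 4 × Fin 4) (Fin 4 × Fin 4 × Fin 4) ℂ :=
  Matrix.of fun p q =>
    so5SpinR u (p.2.1, p.2.2) (q.2.1, q.2.2) * (if p.1 = q.1 then 1 else 0)

/-!
Let `s` be the symmetry sign of the form `ε` on a space of dimension `N = 2 (κ + s)`. The R-matrix
is `(u + κ) (u + P) - u K`, where `P` is the flip and `K` the contraction with `ε`, and the
operators `P` and `K` on three tensor factors satisfy the relations of the Brauer algebra. The flips
alone contribute Yang's R-matrices `u + P`, for which the Yang–Baxter equation holds in the group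
algebra of `S₃`. Everything else is a combination of the nine Brauer diagrams
`(cup at i) ∘ (cap at j)`. The choice of `κ` makes the matrix of its coefficients symmetric in
`i, j`, and symmetry is all that is needed, because transposition reverses the order of the three
R-matrices.
-/

open scoped Matrix Kronecker

theorem yang_baxter_of_mul_eq_mul {R A : Type*} [CommRing R] [Ring A] [Algebra R A] {p q r : A}
    (hpq : p * q = r * p) (hqr : q * r = r * p) (hqp : q * p = p * r) (hrq : r * q = p * r)
    (x y : R) :
    (x • 1 + p) * ((x + y) • 1 + q) * (y • 1 + r) =
      (y • 1 + r) * ((x + y) • 1 + q) * (x • 1 + p) := by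
  have braid : p * (r * p) = r * (p * r) := by
    rw [← hqr, ← mul_assoc, hpq, mul_assoc]
  simp only [add_mul, mul_add, smul_mul_assoc, mul_smul_comm, one_mul, mul_one, mul_assoc,
    hpq, hqr, hqp, hrq, braid]
  module

variable {R n : Type*} [CommRing R]

section MetricPair

variable [Fintype n] [DecidableEq n] {s : R} {ε η : Matrix n n R}

/-- An invariant form `ε^{αβ}` of symmetry sign `s` (`s = 1` in the orthogonal and `s = -1` in the
symplectic case) together with its lowered version `ε_{αβ}`, stored as `η` and normalised by
`∑ β, ε^{αβ} ε_{γβ} = δ^α_γ`. -/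
structure IsMetricPair (s : R) (ε η : Matrix n n R) : Prop where
  sign_mul_self : s * s = 1
  transpose_eq : εᵀ = s • ε
  mul_transpose : ε * ηᵀ = 1

theorem IsMetricPair.symm (h : IsMetricPair s ε η) : IsMetricPair s η ε where
  sign_mul_self := h.sign_mul_self
  transpose_eq := by
    have left_inv : ηᵀ * ε = 1 := mul_eq_one_comm.mp h.mul_transpose
    have right_inv : ε * (s • η) = 1 := by
      rw [mul_smul_comm, ← smul_mul_assoc, ← h.transpose_eq, ← Matrix.transpose_transpose η,
        ← Matrix.transpose_mul, left_inv, Matrix.transpose_one]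
    exact left_inv_eq_right_inv left_inv right_inv
  mul_transpose := by
    rw [← Matrix.transpose_transpose (η * εᵀ), Matrix.transpose_mul, Matrix.transpose_transpose,
      h.mul_transpose, Matrix.transpose_one]

theorem IsMetricPair.mul_eq_smul_one (h : IsMetricPair s ε η) : ε * η = s • 1 := by
  rw [← h.mul_transpose, h.symm.transpose_eq, mul_smul_comm, smul_smul, h.sign_mul_self, one_smul]

end MetricPair

/-- The factorisation of the triple index set that singles out the tensor factor `k` and keeps the
other two in the cyclic order `k + 1, k + 2`. With this order, rather than the increasing one, the
signs in the relations below do not depend on `k`. -/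
def siteSplit (n : Type*) : Fin 3 → (n × n × n ≃ (n × n) × n)
  | 0 => ⟨fun p => ((p.2.1, p.2.2), p.1), fun q => (q.2, q.1.1, q.1.2), fun _ => rfl, fun _ => rfl⟩
  | 1 => ⟨fun p => ((p.2.2, p.1), p.2.1), fun q => (q.1.2, q.2, q.1.1), fun _ => rfl, fun _ => rfl⟩
  | 2 => ⟨fun p => ((p.1, p.2.1), p.2.2), fun q => (q.1.1, q.1.2, q.2), fun _ => rfl, fun _ => rfl⟩

theorem siteSplit_succ_symm (k : Fin 3) (a b c : n) :
    siteSplit n (k + 1) ((siteSplit n k).symm ((a, b), c)) = ((b, c), a) := by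
  fin_cases k <;> rfl

/-- The exchange of the two components of a triple index other than the one at `k`. -/
def siteSwap (n : Type*) (k : Fin 3) : Equiv.Perm (n × n × n) :=
  ((siteSplit n k).trans ((Equiv.prodComm n n).prodCongr (Equiv.refl n))).trans (siteSplit n k).symm

theorem siteSwap_apply_eq_iff {k : Fin 3} {p q : n × n × n} :
    siteSwap n k p = q ↔
      (siteSplit n k p).2 = (siteSplit n k q).2 ∧
        (siteSplit n k p).1.swap = (siteSplit n k q).1 := by
  simp [siteSwap, Equiv.symm_apply_eq, Prod.ext_iff, and_comm]

theorem siteSwap_inv (k : Fin 3) : (siteSwap n k)⁻¹ = siteSwap n k := rfl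

-- Sites are labelled modulo 3, so for `k ≠ l` the third site is `-(k + l)`, while `-(k + k) = k`.
theorem siteSplit_siteSwap (k l : Fin 3) (p : n × n × n) :
    siteSplit n l (siteSwap n k p) =
      ((siteSplit n (-(k + l)) p).1.swap, (siteSplit n (-(k + l)) p).2) := by
  fin_cases k <;> fin_cases l <;> rfl

theorem siteSwap_mul_siteSwap (k l : Fin 3) :
    siteSwap n k * siteSwap n l = siteSwap n l * siteSwap n (-(l + k)) := by
  fin_cases k <;> fin_cases l <;> rfl

variable [DecidableEq n]

/-- The operator `A` on `V ⊗ V` acting on the tensor factors `k + 1, k + 2` of `V ⊗ V ⊗ V`. -/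
def actAt (k : Fin 3) (A : Matrix (n × n) (n × n) R) : Matrix (n × n × n) (n × n × n) R :=
  (A ⊗ₖ (1 : Matrix n n R)).submatrix (siteSplit n k) (siteSplit n k)

variable (R n) in
/-- The flip of the two tensor factors of `V ⊗ V ⊗ V` other than `k`. -/
abbrev swapAt (k : Fin 3) : Matrix (n × n × n) (n × n × n) R :=
  (siteSwap n k).permMatrix R

/-- The map `V → V ⊗ V ⊗ V` that puts its argument at the tensor factor `k` and inserts the
tensor `ε` at the factors `k + 1, k + 2`. Its transpose is the cap contracting these two factors. -/
def cupAt (ε : Matrix n n R) (k : Fin 3) : Matrix (n × n × n) n R :=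
  Matrix.of fun p d =>
    if (siteSplit n k p).2 = d then ε (siteSplit n k p).1.1 (siteSplit n k p).1.2 else 0

/-- Yang's R-matrix `u + P` acting on the two tensor factors of `V ⊗ V ⊗ V` other than `k`. -/
def yangAt (n : Type*) [DecidableEq n] (k : Fin 3) (u : R) : Matrix (n × n × n) (n × n × n) R :=
  u • 1 + swapAt R n k

/-- The R-matrix `u (u + κ) + (u + κ) P - u K` on `V ⊗ V`, where `P` is the flip and `K` has the
entries `ε^{α₁α₂} ε_{β₁β₂}`. -/
def rMatrix (ε η : Matrix n n R) (κ u : R) : Matrix (n × n) (n × n) R :=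
  (u * (u + κ)) • 1 + (u + κ) • Equiv.Perm.permMatrix R (Equiv.prodComm n n) -
    u • Matrix.vecMulVec (Function.uncurry ε) (Function.uncurry η)

section BrauerRelations

variable [Fintype n] {s : R} {ε η : Matrix n n R}

theorem swapAt_mul_swapAt (k l : Fin 3) :
    swapAt R n k * swapAt R n l = swapAt R n (-(k + l)) * swapAt R n k := by
  rw [← Matrix.permMatrix_mul, ← Matrix.permMatrix_mul, siteSwap_mul_siteSwap]

theorem swapAt_mul_cupAt (hε : εᵀ = s • ε) (k l : Fin 3) :
    swapAt R n k * cupAt ε l = s • cupAt ε (-(k + l)) := by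
  have hs (a b : n) : ε b a = s * ε a b := congr_fun₂ hε a b
  rw [PEquiv.toMatrix_toPEquiv_mul]
  ext p d
  simp only [cupAt, Matrix.submatrix_apply, Matrix.of_apply, Matrix.smul_apply, siteSplit_siteSwap,
    Prod.fst_swap, Prod.snd_swap, id, smul_eq_mul]
  rw [hs, mul_ite, mul_zero]

theorem transpose_cupAt_mul_cupAt_self (ε η : Matrix n n R) (k : Fin 3) :
    (cupAt η k)ᵀ * cupAt ε k = (ε * ηᵀ).trace • 1 := by
  ext d e
  simp only [Matrix.mul_apply, Matrix.transpose_apply, ← (siteSplit n k).symm.sum_comp]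
  simp [cupAt, Fintype.sum_prod_type, Matrix.trace, Matrix.mul_apply, Matrix.one_apply,
    eq_comm, mul_comm]

theorem transpose_cupAt_mul_cupAt_succ (ε η : Matrix n n R) (k : Fin 3) :
    (cupAt η k)ᵀ * cupAt ε (k + 1) = (η * ε)ᵀ := by
  ext d e
  simp only [Matrix.mul_apply, Matrix.transpose_apply, ← (siteSplit n k).symm.sum_comp]
  simp [cupAt, siteSplit_succ_symm, Fintype.sum_prod_type]

theorem IsMetricPair.transpose_cupAt_mul_cupAt_of_ne (h : IsMetricPair s ε η) {k l : Fin 3}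
    (hkl : k ≠ l) : (cupAt η k)ᵀ * cupAt ε l = s • 1 := by
  obtain rfl | rfl : l = k + 1 ∨ k = l + 1 := by lia
  · rw [transpose_cupAt_mul_cupAt_succ, h.symm.mul_eq_smul_one, Matrix.transpose_smul,
      Matrix.transpose_one]
  · rw [← Matrix.transpose_transpose (cupAt ε l), ← Matrix.transpose_mul,
      transpose_cupAt_mul_cupAt_succ, Matrix.transpose_transpose, h.mul_eq_smul_one]

theorem yangAt_mul_cupAt (hε : εᵀ = s • ε) (k l : Fin 3) (u : R) :
    yangAt n k u * cupAt ε l = u • cupAt ε l + s • cupAt ε (-(k + l)) := by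
  rw [yangAt, Matrix.add_mul, Matrix.smul_mul, Matrix.one_mul, swapAt_mul_cupAt hε]

theorem yangAt_yang_baxter (x y : R) :
    yangAt n 2 x * yangAt n 1 (x + y) * yangAt n 0 y =
      yangAt n 0 y * yangAt n 1 (x + y) * yangAt n 2 x :=
  yang_baxter_of_mul_eq_mul (swapAt_mul_swapAt 2 1)
    ((swapAt_mul_swapAt 1 0).trans (swapAt_mul_swapAt 2 1))
    ((swapAt_mul_swapAt 1 2).trans (swapAt_mul_swapAt 0 1)) (swapAt_mul_swapAt 0 1) x y

end BrauerRelations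

theorem transpose_yangAt (k : Fin 3) (u : R) : (yangAt n k u)ᵀ = yangAt n k u := by
  simp [yangAt, siteSwap_inv]

section RMatrix

variable {s κ : R} {ε η : Matrix n n R}

theorem actAt_prodComm (k : Fin 3) :
    actAt k (Equiv.Perm.permMatrix R (Equiv.prodComm n n)) = swapAt R n k := by
  ext p q
  simp [actAt, PEquiv.toMatrix_apply, Equiv.toPEquiv_apply, Matrix.one_apply,
    siteSwap_apply_eq_iff, ite_and]

theorem transpose_actAt (k : Fin 3) (A : Matrix (n × n) (n × n) R) :
    (actAt k A)ᵀ = actAt k Aᵀ := by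
  rw [actAt, actAt, Matrix.transpose_submatrix, ← Matrix.kroneckerMap_transpose,
    Matrix.transpose_one]

theorem transpose_rMatrix (ε η : Matrix n n R) (κ u : R) :
    (rMatrix ε η κ u)ᵀ = rMatrix η ε κ u := by
  simp [rMatrix, Equiv.Perm.inv_def, Matrix.transpose_vecMulVec]

theorem transpose_actAt_rMatrix (ε η : Matrix n n R) (k : Fin 3) (κ u : R) :
    (actAt k (rMatrix ε η κ u))ᵀ = actAt k (rMatrix η ε κ u) := by
  rw [transpose_actAt, transpose_rMatrix]

variable [Fintype n]

theorem rMatrix_swap_swap (h : IsMetricPair s ε η) (κ u : R) (p q : n × n) :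
    rMatrix ε η κ u p.swap q.swap = rMatrix ε η κ u p q := by
  have one_entry : (1 : Matrix (n × n) (n × n) R) p.swap q.swap = (1 : Matrix _ _ R) p q := by
    simp [Matrix.one_apply]
  have flip_entry : Equiv.Perm.permMatrix R (Equiv.prodComm n n) p.swap q.swap =
      Equiv.Perm.permMatrix R (Equiv.prodComm n n) p q := by
    simp [PEquiv.toMatrix_apply, Equiv.toPEquiv_apply, Prod.swap_eq_iff_eq_swap]
  have contraction_entry : ε p.2 p.1 * η q.2 q.1 = ε p.1 p.2 * η q.1 q.2 := by
    have hε : ε p.2 p.1 = s * ε p.1 p.2 := congr_fun₂ h.transpose_eq p.1 p.2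
    have hη : η q.2 q.1 = s * η q.1 q.2 := congr_fun₂ h.symm.transpose_eq q.1 q.2
    rw [hε, hη, mul_mul_mul_comm, h.sign_mul_self, one_mul]
  simp only [rMatrix, Matrix.sub_apply, Matrix.add_apply, Matrix.smul_apply, one_entry, flip_entry,
    Matrix.vecMulVec_apply, Function.uncurry, Prod.fst_swap, Prod.snd_swap, contraction_entry]

theorem actAt_vecMulVec (ε η : Matrix n n R) (k : Fin 3) :
    actAt k (Matrix.vecMulVec (Function.uncurry ε) (Function.uncurry η)) =
      cupAt ε k * (cupAt η k)ᵀ := by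
  ext p q
  simp [actAt, cupAt, Matrix.mul_apply, Matrix.vecMulVec_apply, Function.uncurry, Matrix.one_apply]

theorem actAt_rMatrix (ε η : Matrix n n R) (k : Fin 3) (κ u : R) :
    actAt k (rMatrix ε η κ u) = (u + κ) • yangAt n k u - u • (cupAt ε k * (cupAt η k)ᵀ) := by
  rw [← actAt_vecMulVec, yangAt, ← actAt_prodComm]
  simp only [actAt, rMatrix, sub_eq_add_neg, ← neg_smul, Matrix.add_kronecker,
    Matrix.smul_kronecker, Matrix.one_kronecker_one, Matrix.submatrix_add, Matrix.submatrix_smul,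
    Matrix.submatrix_one_equiv, Pi.add_apply, Pi.smul_apply]
  module

namespace IsMetricPair

theorem actAt_rMatrix_mul_cupAt_self (h : IsMetricPair s ε η)
    (hκ : (Fintype.card n : R) = 2 * (κ + s)) (k : Fin 3) (u : R) :
    actAt k (rMatrix ε η κ u) * cupAt ε k = ((u - κ) * (u - s)) • cupAt ε k := by
  rw [actAt_rMatrix, Matrix.sub_mul, Matrix.smul_mul, yangAt_mul_cupAt h.transpose_eq,
    Matrix.smul_mul, Matrix.mul_assoc, transpose_cupAt_mul_cupAt_self, h.mul_transpose,
    Matrix.trace_one, hκ, show -(k + k) = k by lia, Matrix.mul_smul, Matrix.mul_one]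
  module

theorem actAt_rMatrix_mul_cupAt_of_ne (h : IsMetricPair s ε η) {k l : Fin 3} (hkl : k ≠ l)
    (κ u : R) :
    actAt k (rMatrix ε η κ u) * cupAt ε l =
      (u + κ) • (u • cupAt ε l + s • cupAt ε (-(k + l))) - (u * s) • cupAt ε k := by
  rw [actAt_rMatrix, Matrix.sub_mul, Matrix.smul_mul, yangAt_mul_cupAt h.transpose_eq,
    Matrix.smul_mul, Matrix.mul_assoc, h.transpose_cupAt_mul_cupAt_of_ne hkl, Matrix.mul_smul,
    Matrix.mul_one, smul_smul]

theorem actAt_rMatrix_mul_actAt_rMatrix_mul_cupAt (h : IsMetricPair s ε η)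
    (hκ : (Fintype.card n : R) = 2 * (κ + s)) (x y : R) :
    actAt 0 (rMatrix ε η κ y) * (actAt 1 (rMatrix ε η κ (x + y)) * cupAt ε 2) =
      ((x + κ) * (κ - s * y * (x + y + κ))) • cupAt ε 0 +
        (s * (x + y) * (x + κ) * (y + κ)) • cupAt ε 1 +
        ((x + y) * (y + κ) * (y * (x + y + κ) - 1)) • cupAt ε 2 := by
  have hs := h.sign_mul_self
  rw [h.actAt_rMatrix_mul_cupAt_of_ne (by decide)]
  simp only [Matrix.mul_sub, Matrix.mul_add, Matrix.mul_smul, h.actAt_rMatrix_mul_cupAt_self hκ,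
    h.actAt_rMatrix_mul_cupAt_of_ne (show (0 : Fin 3) ≠ 1 by decide),
    h.actAt_rMatrix_mul_cupAt_of_ne (show (0 : Fin 3) ≠ 2 by decide),
    show -(1 + 2 : Fin 3) = 0 by decide, show -(0 + 1 : Fin 3) = 2 by decide,
    show -(0 + 2 : Fin 3) = 1 by decide]
  match_scalars <;> grind

-- In the contraction part, exchanging `cupAt ε i * (cupAt η j)ᵀ` and `cupAt ε j * (cupAt η i)ᵀ`
-- changes nothing: this is the whole content of the Yang–Baxter equation beyond Yang's.
theorem actAt_rMatrix_mul_actAt_rMatrix_mul_actAt_rMatrix (h : IsMetricPair s ε η)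
    (hκ : (Fintype.card n : R) = 2 * (κ + s)) (x y : R) :
    actAt 2 (rMatrix ε η κ x) * actAt 1 (rMatrix ε η κ (x + y)) * actAt 0 (rMatrix ε η κ y) =
      ((x + κ) * (x + y + κ) * (y + κ)) • (yangAt n 2 x * yangAt n 1 (x + y) * yangAt n 0 y) +
      ((x + y) * (x + κ) * y * (1 - x * (x + y + κ))) • (cupAt ε 0 * (cupAt η 0)ᵀ) -
      ((x + y) * (x + κ) * (y + κ) * x * y) • (cupAt ε 1 * (cupAt η 1)ᵀ) +
      ((x + y) * (y + κ) * x * (1 - y * (x + y + κ))) • (cupAt ε 2 * (cupAt η 2)ᵀ) -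
      ((x + y) * (x + κ) * (y + κ)) •
        ((s * y) • (cupAt ε 0 * (cupAt η 1)ᵀ + cupAt ε 1 * (cupAt η 0)ᵀ) +
          (cupAt ε 0 * (cupAt η 2)ᵀ + cupAt ε 2 * (cupAt η 0)ᵀ) +
          (s * x) • (cupAt ε 1 * (cupAt η 2)ᵀ + cupAt ε 2 * (cupAt η 1)ᵀ)) := by
  have hs := h.sign_mul_self
  have cap_one : (cupAt η 1)ᵀ * actAt 0 (rMatrix ε η κ y) =
      (y + κ) • (y • (cupAt η 1)ᵀ + s • (cupAt η 2)ᵀ) - (y * s) • (cupAt η 0)ᵀ := by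
    simpa [Matrix.transpose_mul, transpose_actAt_rMatrix, show -1 = (2 : Fin 3) by decide] using
      congr_arg Matrix.transpose
        (h.symm.actAt_rMatrix_mul_cupAt_of_ne (show (0 : Fin 3) ≠ 1 by decide) κ y)
  have cap_two :
      (cupAt η 2)ᵀ * (actAt 1 (rMatrix ε η κ (x + y)) * actAt 0 (rMatrix ε η κ y)) =
        ((x + κ) * (κ - s * y * (x + y + κ))) • (cupAt η 0)ᵀ +
          (s * (x + y) * (x + κ) * (y + κ)) • (cupAt η 1)ᵀ +
          ((x + y) * (y + κ) * (y * (x + y + κ) - 1)) • (cupAt η 2)ᵀ := by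
    simpa [Matrix.transpose_mul, transpose_actAt_rMatrix, Matrix.mul_assoc] using
      congr_arg Matrix.transpose (h.symm.actAt_rMatrix_mul_actAt_rMatrix_mul_cupAt hκ x y)
  rw [Matrix.mul_assoc, actAt_rMatrix ε η 2, Matrix.sub_mul, Matrix.smul_mul, Matrix.smul_mul,
    Matrix.mul_assoc (cupAt ε 2), cap_two, actAt_rMatrix ε η 1, Matrix.sub_mul, Matrix.smul_mul,
    Matrix.smul_mul, Matrix.mul_assoc (cupAt ε 1), cap_one, actAt_rMatrix ε η 0]
  simp only [Matrix.mul_sub, Matrix.mul_add, Matrix.add_mul, Matrix.mul_smul, Matrix.smul_mul,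
    ← Matrix.mul_assoc, yangAt_mul_cupAt h.transpose_eq, show -(1 + 0 : Fin 3) = 2 by decide,
    show -(2 + 0 : Fin 3) = 1 by decide, show -(2 + 1 : Fin 3) = 0 by decide,
    show -(2 + 2 : Fin 3) = 2 by decide]
  match_scalars <;> grind

end IsMetricPair

theorem so5SpinR_YangBaxter_general (h : IsMetricPair s ε η)
    (hκ : (Fintype.card n : R) = 2 * (κ + s)) (u v : R) :
    actAt 2 (rMatrix ε η κ (u - v)) * actAt 1 (rMatrix ε η κ u) * actAt 0 (rMatrix ε η κ v) =
      actAt 0 (rMatrix ε η κ v) * actAt 1 (rMatrix ε η κ u) *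
        actAt 2 (rMatrix ε η κ (u - v)) := by
  obtain ⟨x, rfl⟩ : ∃ x, u = x + v := ⟨u - v, (sub_add_cancel u v).symm⟩
  rw [add_sub_cancel_right]
  have reversed :
      actAt 0 (rMatrix ε η κ v) * actAt 1 (rMatrix ε η κ (x + v)) * actAt 2 (rMatrix ε η κ x) =
        (actAt 2 (rMatrix η ε κ x) * actAt 1 (rMatrix η ε κ (x + v)) *
          actAt 0 (rMatrix η ε κ v))ᵀ := by
    simp only [Matrix.transpose_mul, transpose_actAt_rMatrix, Matrix.mul_assoc]
  have yang_reversed :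
      (yangAt n 2 x * yangAt n 1 (x + v) * yangAt n 0 v)ᵀ =
        yangAt n 2 x * yangAt n 1 (x + v) * yangAt n 0 v := by
    rw [yangAt_yang_baxter]
    simp only [Matrix.transpose_mul, transpose_yangAt, ← Matrix.mul_assoc, yangAt_yang_baxter]
  rw [reversed, h.actAt_rMatrix_mul_actAt_rMatrix_mul_actAt_rMatrix hκ,
    h.symm.actAt_rMatrix_mul_actAt_rMatrix_mul_actAt_rMatrix hκ]
  simp only [Matrix.transpose_add, Matrix.transpose_sub, Matrix.transpose_smul, yang_reversed,
    Matrix.transpose_mul (cupAt _ _), Matrix.transpose_transpose]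
  module

end RMatrix

theorem isMetricPair_symplEps :
    IsMetricPair (-1) (Matrix.of symplEps) (Matrix.of symplEps) where
  sign_mul_self := by norm_num
  transpose_eq := by
    ext a b
    fin_cases a <;> fin_cases b <;> norm_num [symplEps]
  mul_transpose := by
    ext a b
    fin_cases a <;> fin_cases b <;> simp [symplEps, Matrix.mul_apply, Fin.sum_univ_four] <;>
      norm_num

theorem so5SpinR_eq_rMatrix (u : ℂ) :
    so5SpinR u = rMatrix (Matrix.of symplEps) (Matrix.of symplEps) 3 (2 * u) := by
  ext p q
  simp only [so5SpinR, rMatrix, Matrix.of_apply, Matrix.sub_apply, Matrix.add_apply,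
    Matrix.smul_apply, smul_eq_mul, Matrix.one_apply, PEquiv.toMatrix_apply, Equiv.toPEquiv_apply,
    Option.mem_some_iff, Equiv.prodComm_apply, Matrix.vecMulVec_apply, Function.uncurry,
    Prod.ext_iff, Prod.fst_swap, Prod.snd_swap]
  grind

theorem so5SpinR12_eq_actAt (u : ℂ) :
    so5SpinR12 u = actAt 2 (rMatrix (Matrix.of symplEps) (Matrix.of symplEps) 3 (2 * u)) := by
  rw [← so5SpinR_eq_rMatrix]
  rfl

-- `actAt 1` takes the tensor factors in the order 3, 1.
theorem so5SpinR13_eq_actAt (u : ℂ) :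
    so5SpinR13 u = actAt 1 (rMatrix (Matrix.of symplEps) (Matrix.of symplEps) 3 (2 * u)) := by
  ext p q
  rw [so5SpinR13, so5SpinR_eq_rMatrix, Matrix.of_apply,
    ← rMatrix_swap_swap isMetricPair_symplEps]
  rfl

theorem so5SpinR23_eq_actAt (u : ℂ) :
    so5SpinR23 u = actAt 0 (rMatrix (Matrix.of symplEps) (Matrix.of symplEps) 3 (2 * u)) := by
  rw [← so5SpinR_eq_rMatrix]
  rfl

/-- The spinorial `so(5)` R-matrix satisfies the Yang–Baxter equation. -/
theorem so5SpinR_YangBaxter (u v : ℂ) :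
    so5SpinR12 (u - v) * so5SpinR13 u * so5SpinR23 v =
      so5SpinR23 v * so5SpinR13 u * so5SpinR12 (u - v) := by
  have hκ : (Fintype.card (Fin 4) : ℂ) = 2 * (3 + -1) := by norm_num
  simpa only [so5SpinR12_eq_actAt, so5SpinR13_eq_actAt, so5SpinR23_eq_actAt, mul_sub] using
    so5SpinR_YangBaxter_general isMetricPair_symplEps hκ (2 * u) (2 * v)
end

section
/- Let γ^1,…,γ^n be a Clifford family of M×M complex matrices, γ^{ab} := (1/2)(γ^aγ^b − γ^bγ^a), L^{ab}(u) := u·δ^{ab}·1_M − (1/2)·γ^{ab}, β := n/2 − 1, and let R^{a_1 a_2}_{b_1 b_2}(u) := u(u+β)δ^{a_1}_{b_1}δ^{a_2}_{b_2} + (u+β)δ^{a_1}_{b_2}δ^{a_2}_{b_1} − u·δ^{a_1 a_2}δ_{b_1 b_2}. For N ≥ 1 define the spinor monodromy entries T^{a_1…a_N}_{c_1…c_N}(u) := L^{a_1 c_1}(u)·L^{a_2 c_2}(u)⋯L^{a_N c_N}(u) and the reversed-order entries T̃^{c_1…c_N}_{b_1…b_N}(v) := L^{c_N b_N}(v)·L^{c_{N−1}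 b_{N−1}}(v)⋯L^{c_1 b_1}(v) (products of M×M matrices), and the vector monodromy entries 𝕋^{a_0, a_1…a_N}_{b_0, b_1…b_N}(u) := Σ_{d_1,…,d_{N−1}} R^{a_0 a_1}_{d_1 b_1}(u)·R^{d_1 a_2}_{d_2 b_2}(u)⋯R^{d_{N−1} a_N}_{b_0 b_N}(u) (complex scalars). Then for all complex u, all multi-indices a_1,…,a_N, b_1,…,b_N and all b_0 ∈ {1,…,n}: Σ_{c_1,…,c_N} T^{a_1…a_N}_{c_1…c_N}(u+β−1/2) · γ^{b_0} · T̃^{c_1…c_N}_{b_1…b_N}(−u−1/2) = (−1)^N · Σ_{a_0=1}^n 𝕋^{a_0, a_1…a_N}_{b_0, b_1…b_N}(u) · γ^{a_0}. -/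
/-- The spinor L-operator `L^{ab}(u) = u·δ^{ab}·1 − (1/2)·γ^{ab}`,
`γ^{ab} = (1/2)(γ^aγ^b − γ^bγ^a)`. -/
noncomputable def spinL {n M : ℕ} (γ : Fin n → Matrix (Fin M) (Fin M) ℂ)
    (u : ℂ) (a b : Fin n) : Matrix (Fin M) (Fin M) ℂ :=
  (u * (if a = b then (1 : ℂ) else 0)) • (1 : Matrix (Fin M) (Fin M) ℂ) -
    (1/2 : ℂ) • ((1/2 : ℂ) • (γ a * γ b - γ b * γ a))

/-- The fundamental orthogonal R-matrix entries with crossing parameter `β = n/2 − 1`. -/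
noncomputable def vecR (n : ℕ) (u : ℂ) (a₁ a₂ b₁ b₂ : Fin n) : ℂ :=
  u * (u + ((n : ℂ) / 2 - 1)) *
      (if a₁ = b₁ then (1 : ℂ) else 0) * (if a₂ = b₂ then (1 : ℂ) else 0) +
    (u + ((n : ℂ) / 2 - 1)) *
      (if a₁ = b₂ then (1 : ℂ) else 0) * (if a₂ = b₁ then (1 : ℂ) else 0) -
    u * (if a₁ = a₂ then (1 : ℂ) else 0) * (if b₁ = b₂ then (1 : ℂ) else 0)

/-- Spinor monodromy matrix entries `T^{a₁…a_N}_{c₁…c_N}(u) = L^{a₁c₁}(u)⋯L^{a_Nc_N}(u)`. -/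
noncomputable def spinMonodromy {n M : ℕ} (γ : Fin n → Matrix (Fin M) (Fin M) ℂ) (N : ℕ)
    (u : ℂ) (a c : Fin N → Fin n) : Matrix (Fin M) (Fin M) ℂ :=
  (List.ofFn fun i => spinL γ u (a i) (c i)).prod

/-- Reversed-order spinor monodromy matrix entries
`T̃^{c₁…c_N}_{b₁…b_N}(v) = L^{c_N b_N}(v)⋯L^{c₁ b₁}(v)`. -/
noncomputable def spinMonodromyRev {n M : ℕ} (γ : Fin n → Matrix (Fin M) (Fin M) ℂ) (N : ℕ)
    (v : ℂ) (c b : Fin N → Fin n) : Matrix (Fin M) (Fin M) ℂ :=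
  (List.ofFn fun i => spinL γ v (c i) (b i)).reverse.prod

/-- Vector monodromy matrix entries
`𝕋^{a₀,a₁…a_N}_{b₀,b₁…b_N}(u) = Σ_{d} R^{a₀a₁}_{d₁b₁}(u) R^{d₁a₂}_{d₂b₂}(u) ⋯
R^{d_{N−1}a_N}_{b₀b_N}(u)`, realized as the `(a₀,b₀)` entry of a product of `n×n`
matrices over the auxiliary vector space. -/
noncomputable def vecMonodromy (n N : ℕ) (u : ℂ) (a b : Fin N → Fin n)
    (a₀ b₀ : Fin n) : ℂ :=
  ((List.ofFn fun i => Matrix.of fun x y : Fin n => vecR n u x (a i) y (b i)).prod) a₀ b₀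

/-!
For fixed indices `a`, `b`, consider the map `X ↦ ∑_c L^{ac}(u+β−1/2) X L^{cb}(−u−1/2)`. Since
`γ^bγ^a = 2δ^{ab} − γ^aγ^b` and `∑_c γ^c γ^d γ^c = (2 − n) γ^d = −2β γ^d`, it preserves the span of
the `γ^d`, on which it acts through the matrix `−R^{·a}_{·b}(u)`: the shifts of the spectral
parameters make the contributions of `γ^aγ^dγ^b` cancel. The sum over all `c_1, …, c_N` composes `N`
such maps, the innermost being that of site `N`, so the product of their matrices is `(−1)^N` times
the vector monodromy matrix.
-/

/-- A family of elements of a `K`-algebra satisfying the Clifford relations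
`γ^aγ^b + γ^bγ^a = 2δ^{ab}` of the standard Euclidean form. -/
def IsCliffordFamily (K : Type*) {ι A : Type*} [DecidableEq ι] [CommSemiring K] [Semiring A]
    [Algebra K A] (γ : ι → A) : Prop :=
  ∀ a b, γ a * γ b + γ b * γ a = if a = b then (2 : K) • (1 : A) else 0

namespace IsCliffordFamily

variable {K ι A : Type*} [DecidableEq ι] [Ring A] {γ : ι → A}

theorem mul_eq_ite_sub_mul [CommRing K] [Algebra K A] (hγ : IsCliffordFamily K γ) (a b : ι) :
    γ b * γ a = (if a = b then (2 : K) • (1 : A) else 0) - γ a * γ b :=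
  eq_sub_of_add_eq' (hγ a b)

variable [Field K] [NeZero (2 : K)] [Algebra K A]

theorem mul_self (hγ : IsCliffordFamily K γ) (a : ι) : γ a * γ a = 1 := by
  have h : (2 : K) • (γ a * γ a) = (2 : K) • (1 : A) := by
    rw [two_smul, hγ a a, if_pos rfl]
  exact smul_right_injective A (two_ne_zero (α := K)) h

theorem sum_mul_mul_self [Fintype ι] (hγ : IsCliffordFamily K γ) (d : ι) :
    ∑ c, γ c * γ d * γ c = (2 - Fintype.card ι : K) • γ d := by
  have hterm (c : ι) : γ c * γ d * γ c = (if d = c then (2 : K) • γ c else 0) - γ d := by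
    rw [hγ.mul_eq_ite_sub_mul d c, sub_mul, mul_assoc, hγ.mul_self, mul_one, ite_mul, zero_mul,
      smul_one_mul]
  simp [hterm, sub_smul, Nat.cast_smul_eq_nsmul]

end IsCliffordFamily

section OrthogonalR

variable {K ι V : Type*} [DecidableEq ι] [CommRing K]

/-- The orthogonal R-matrix `R^{xa}_{yb}(u)` with crossing parameter `β`, as a matrix in the
auxiliary indices `x`, `y` depending on the quantum indices `a`, `b`. -/
def orthogonalR (β u : K) (a b : ι) : Matrix ι ι K :=
  (if a = b then u * (u + β) else 0) • 1 + (u + β) • .single b a 1 - u • .single a b 1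

theorem sum_orthogonalR_smul [Fintype ι] [AddCommGroup V] [Module K V] (v : ι → V) (β u : K)
    (a b d : ι) :
    ∑ e, orthogonalR β u a b e d • v e =
      (if a = b then u * (u + β) else 0) • v d + (if a = d then (u + β) • v b else 0) -
        (if b = d then u • v a else 0) := by
  simp only [orthogonalR, Matrix.sub_apply, Matrix.add_apply, Matrix.smul_apply, Matrix.one_apply,
    Matrix.single_apply, smul_eq_mul]
  simp only [sub_smul, add_smul, mul_ite, mul_one, mul_zero, ite_smul, zero_smul, ite_and,
    Finset.sum_add_distrib, Finset.sum_sub_distrib, Finset.sum_ite_eq, Finset.sum_ite_eq',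
    Finset.mem_univ, if_true]

end OrthogonalR

section CliffordL

variable {K ι A : Type*} [DecidableEq ι] [Field K] [Ring A] [Algebra K A]

/-- The spinor L-operator `L^{ab}(u) = u·δ^{ab}·1 − (1/2)·γ^{ab}` of a family `γ` in an arbitrary
`K`-algebra. -/
def cliffordL (γ : ι → A) (u : K) (a b : ι) : A :=
  (u * if a = b then 1 else 0) • (1 : A) - (1 / 2 : K) • ((1 / 2 : K) • (γ a * γ b - γ b * γ a))

variable [NeZero (2 : K)] {γ : ι → A}

theorem cliffordL_sub_half (hγ : IsCliffordFamily K γ) (u : K) (a b : ι) :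
    cliffordL γ (u - 1 / 2) a b =
      (if a = b then u • (1 : A) else 0) - (1 / 2 : K) • (γ a * γ b) := by
  have h2 := two_ne_zero (α := K)
  rw [cliffordL, hγ.mul_eq_ite_sub_mul a b]
  split_ifs <;> match_scalars <;> field_simp <;> ring

theorem sum_cliffordL_mul_mul_cliffordL [Fintype ι] (hγ : IsCliffordFamily K γ) (u v : K)
    (a b : ι) (X : A) :
    ∑ c, cliffordL γ (u - 1 / 2) a c * X * cliffordL γ (v - 1 / 2) c b =
      (if a = b then u * v else 0) • X - (u / 2) • (X * γ a * γ b) - (v / 2) • (γ a * γ b * X) +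
        (1 / 2 : K) ^ 2 • (γ a * (∑ c, γ c * X * γ c) * γ b) := by
  have hterm (c : ι) : cliffordL γ (u - 1 / 2) a c * X * cliffordL γ (v - 1 / 2) c b =
      (if a = c then (if c = b then u * v else 0) • X - (u / 2) • (X * γ c * γ b) else 0) -
        (if c = b then (v / 2) • (γ a * γ c * X) else 0) +
        (1 / 2 : K) ^ 2 • (γ a * (γ c * X * γ c) * γ b) := by
    rw [cliffordL_sub_half hγ, cliffordL_sub_half hγ]
    split_ifs <;> simp only [sub_mul, mul_sub, smul_mul_assoc, mul_smul_comm, one_mul, mul_one,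
      mul_assoc, zero_mul, mul_zero] <;> module
  simp only [hterm, Finset.sum_add_distrib, Finset.sum_sub_distrib, Finset.sum_ite_eq,
    Finset.sum_ite_eq', Finset.mem_univ, if_true, ← Finset.smul_sum, ← Finset.mul_sum,
    ← Finset.sum_mul]

theorem sum_cliffordL_mul_gamma_mul_cliffordL [Fintype ι] (hγ : IsCliffordFamily K γ) {β : K}
    (hβ : β = (Fintype.card ι : K) / 2 - 1) (u : K) (a b d : ι) :
    ∑ c, cliffordL γ (u + β - 1 / 2) a c * γ d * cliffordL γ (-u - 1 / 2) c b =
      ∑ e, (-orthogonalR β u a b) e d • γ e := by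
  have h2 := two_ne_zero (α := K)
  have hcard : (2 - Fintype.card ι : K) = -2 * β := by rw [hβ]; field_simp; ring
  have hleft : γ d * γ a * γ b = (if a = d then (2 : K) • γ b else 0) - γ a * γ d * γ b := by
    rw [hγ.mul_eq_ite_sub_mul a d, sub_mul, ite_mul, zero_mul, smul_one_mul]
  have hright : γ a * γ b * γ d = (if b = d then (2 : K) • γ a else 0) - γ a * γ d * γ b := by
    rw [mul_assoc, eq_sub_of_add_eq (hγ b d), mul_sub, mul_ite, mul_zero, mul_smul_one, mul_assoc]
  simp only [Matrix.neg_apply, neg_smul, Finset.sum_neg_distrib]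
  rw [sum_cliffordL_mul_mul_cliffordL hγ, sum_orthogonalR_smul, hγ.sum_mul_mul_self, hcard,
    hleft, hright, mul_smul_comm, smul_mul_assoc]
  split_ifs <;> match_scalars <;> field_simp <;> ring

end CliffordL

theorem sum_prod_mul_mul_reverse_prod_eq_sum_smul {K A ι κ : Type*} [CommSemiring K] [Semiring A]
    [Algebra K A] [Fintype ι] [DecidableEq ι] [Fintype κ] {N : ℕ} {P Q : Fin N → κ → A}
    {W : Fin N → Matrix ι ι K} {v : ι → A}
    (h : ∀ i d, ∑ c, P i c * v d * Q i c = ∑ e, W i e d • v e) (d : ι) :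
    ∑ c : Fin N → κ,
        (List.ofFn fun i => P i (c i)).prod * v d * (List.ofFn fun i => Q i (c i)).reverse.prod =
      ∑ e, (List.ofFn W).prod e d • v e := by
  induction N with
  | zero => simp [Matrix.one_apply]
  | succ N ih =>
    let tailSum : A := ∑ c : Fin N → κ, (List.ofFn fun i => P i.succ (c i)).prod * v d *
      (List.ofFn fun i => Q i.succ (c i)).reverse.prod
    let V : Matrix ι ι K := (List.ofFn fun i : Fin N => W i.succ).prod
    calc
      _ = ∑ c₀, P 0 c₀ * tailSum * Q 0 c₀ := by
        rw [← (Fin.consEquiv fun _ => κ).sum_comp, Fintype.sum_prod_type]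
        simp [tailSum, Fin.consEquiv, List.ofFn_succ, Finset.mul_sum, Finset.sum_mul, mul_assoc]
      _ = ∑ c₀, P 0 c₀ * (∑ e, V e d • v e) * Q 0 c₀ := by
        rw [show tailSum = ∑ e, V e d • v e from ih fun i => h i.succ]
      _ = ∑ e, V e d • ∑ c₀, P 0 c₀ * v e * Q 0 c₀ := by
        simp only [Finset.mul_sum, Finset.sum_mul, Finset.smul_sum, mul_smul_comm, smul_mul_assoc]
        exact Finset.sum_comm
      _ = ∑ e, V e d • ∑ f, W 0 f e • v f := by simp only [h]
      _ = ∑ f, (W 0 * V) f d • v f := by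
        simp only [Matrix.mul_apply, Finset.sum_smul, Finset.smul_sum, smul_smul, mul_comm]
        exact Finset.sum_comm
      _ = _ := by rw [List.ofFn_succ, List.prod_cons]

theorem spinor_vector_monodromy_fusion_general {ι K A : Type*} [Fintype ι] [DecidableEq ι]
    [Field K] [NeZero (2 : K)] [Ring A] [Algebra K A] {γ : ι → A} (hγ : IsCliffordFamily K γ)
    {β : K} (hβ : β = (Fintype.card ι : K) / 2 - 1) {N : ℕ} (u : Fin N → K) (a b : Fin N → ι)
    (b₀ : ι) :
    ∑ c : Fin N → ι,
        (List.ofFn fun i => cliffordL γ (u i + β - 1 / 2) (a i) (c i)).prod * γ b₀ *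
          (List.ofFn fun i => cliffordL γ (-u i - 1 / 2) (c i) (b i)).reverse.prod =
      (-1 : K) ^ N •
        ∑ a₀, (List.ofFn fun i => orthogonalR β (u i) (a i) (b i)).prod a₀ b₀ • γ a₀ := by
  have hneg : (List.ofFn fun i => -orthogonalR β (u i) (a i) (b i)).prod =
      (-1 : K) ^ N • (List.ofFn fun i => orthogonalR β (u i) (a i) (b i)).prod := by
    simpa [List.map_ofFn, Function.comp_def] using
      (List.smul_prod (List.ofFn fun i => orthogonalR β (u i) (a i) (b i)) (-1 : K)).symm
  rw [sum_prod_mul_mul_reverse_prod_eq_sum_smul fun i =>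
    sum_cliffordL_mul_gamma_mul_cliffordL hγ hβ (u i) (a i) (b i), hneg]
  simp only [Matrix.smul_apply, smul_assoc, Finset.smul_sum]

theorem vecMonodromy_eq_prod_orthogonalR (n N : ℕ) (u : ℂ) (a b : Fin N → Fin n)
    (a₀ b₀ : Fin n) :
    vecMonodromy n N u a b a₀ b₀ =
      (List.ofFn fun i => orthogonalR ((n : ℂ) / 2 - 1) u (a i) (b i)).prod a₀ b₀ := by
  have hR (a b : Fin n) : (Matrix.of fun x y => vecR n u x a y b) =
      orthogonalR ((n : ℂ) / 2 - 1) u a b := by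
    ext x y
    simp only [vecR, orthogonalR, Matrix.of_apply, Matrix.sub_apply, Matrix.add_apply,
      Matrix.smul_apply, Matrix.one_apply, Matrix.single_apply, smul_eq_mul]
    grind
  simp only [vecMonodromy, hR]

/-- Fusion relation between spinor and vector monodromy matrices:
`Σ_c T^{a}_{c}(u+β−1/2) · γ^{b₀} · T̃^{c}_{b}(−u−1/2)
  = (−1)^N · Σ_{a₀} 𝕋^{a₀,a}_{b₀,b}(u) · γ^{a₀}`. -/
theorem spinor_vector_monodromy_fusion {n M : ℕ}
    (γ : Fin n → Matrix (Fin M) (Fin M) ℂ)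
    (hγ : ∀ a b, γ a * γ b + γ b * γ a =
      if a = b then (2 : ℂ) • (1 : Matrix (Fin M) (Fin M) ℂ) else 0)
    (N : ℕ) (hN : 1 ≤ N) (β : ℂ) (hβ : β = (n : ℂ) / 2 - 1) :
    ∀ (u : ℂ) (a b : Fin N → Fin n) (b₀ : Fin n),
      ∑ c : Fin N → Fin n,
          spinMonodromy γ N (u + β - 1/2) a c * γ b₀ *
            spinMonodromyRev γ N (-u - 1/2) c b =
        (-1 : ℂ) ^ N • ∑ a₀ : Fin n, vecMonodromy n N u a b a₀ b₀ • γ a₀ := by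
  intro u a b b₀
  simp only [vecMonodromy_eq_prod_orthogonalR, ← hβ]
  exact spinor_vector_monodromy_fusion_general hγ (by simpa using hβ) (fun _ => u) a b b₀
end
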